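/- Let $k \ge 2$ be an integer, let $\rho = e^{2\pi i/3}$ be a primitive cube root of unity, and define $f : \mathbb{C}^2 \to \mathbb{C}^3$ by $f(u,v) = (u,\ uv + v^{3k-1},\ v^3)$. Then the closure in $\mathbb{C}^2$ of the set $\{(u,v) : \exists (u',v') \neq (u,v) \text{ with } f(u,v) = f(u',v')\}$ equals $\{(u,v) \in \mathbb{C}^2 : (u - \rho v^{3k-2})(u - \rho^2 v^{3k-2}) = 0\}$. -/

import Mathlib

/-!
If `(u, v)` and `(u, v')` are distinct with `v ^ d = v' ^ d`, then `v ≠ 0` and `v' = ζ⁻¹ v` for a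
`d`-th root of unity `ζ ≠ 1`. When `d ∣ n + 2` we have `(ζ⁻¹) ^ (n + 1) = ζ`, so `u v + v ^ (n + 1)`
changes by `v (1 - ζ⁻¹) (u - ζ v ^ n)` in passing from `v'` to `v`. Hence the double points form
the curves `u = ζ v ^ n` with the origin removed, and taking the closure restores the origin.
For `H_k` take `d = 3` and `n = 3k - 2`.
-/

/-- Mond's simple germ `H_k : (u,v) ↦ (u, uv + v^{3k-1}, v³)`. -/
def Hk (k : ℕ) (q : ℂ × ℂ) : ℂ × ℂ × ℂ :=
  (q.1, q.1 * q.2 + q.2 ^ (3 * k - 1), q.2 ^ 3)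

open scoped Topology

/-- The points at which `f` fails to be injective. The double point set `D(f)` of a map between
topological spaces is the closure of this set. -/
def doublePoints {X Y : Type*} (f : X → Y) : Set X :=
  {x | ∃ y, y ≠ x ∧ f x = f y}

/-- The one-parameter unfolding of the monomial plane curve `v ↦ (v ^ (n + 1), v ^ d)`, with
unfolding parameter `u = q.1`. It is Mond's `H_k` for `n = 3k - 2` and `d = 3`; the exponent
`n + 1` avoids truncated subtraction. -/
def monomialUnfolding (K : Type*) [Semiring K] (n d : ℕ) (q : K × K) : K × K × K :=
  (q.1, q.1 * q.2 + q.2 ^ (n + 1), q.2 ^ d)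

section Field

variable {K : Type*} [Field K] {n d : ℕ}

lemma mul_add_pow_eq_inv_mul_iff {ζ u v : K} (hζ : ζ ^ (n + 2) = 1) (hζ1 : ζ ≠ 1) (hv : v ≠ 0) :
    u * v + v ^ (n + 1) = u * (ζ⁻¹ * v) + (ζ⁻¹ * v) ^ (n + 1) ↔ u = ζ * v ^ n := by
  have hζ0 : ζ ≠ 0 := ne_zero_pow (n + 1).succ_ne_zero (hζ ▸ one_ne_zero)
  have hpow : ζ⁻¹ ^ (n + 1) = ζ := by
    rw [inv_pow]
    exact inv_eq_of_mul_eq_one_right ((pow_succ ζ (n + 1)).symm.trans hζ)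
  have hfactor : u * v + v ^ (n + 1) - (u * (ζ⁻¹ * v) + (ζ⁻¹ * v) ^ (n + 1)) =
      v * (1 - ζ⁻¹) * (u - ζ * v ^ n) := by
    rw [mul_pow, hpow]
    field_simp
    ring
  have hunit : v * (1 - ζ⁻¹) ≠ 0 :=
    mul_ne_zero hv (sub_ne_zero.2 (inv_ne_one.2 hζ1).symm)
  rw [← sub_eq_zero, hfactor, mul_eq_zero_iff_left hunit, sub_eq_zero]

lemma mem_doublePoints_monomialUnfolding_iff (hdn : d ∣ n + 2) {q : K × K} :
    q ∈ doublePoints (monomialUnfolding K n d) ↔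
      q.2 ≠ 0 ∧ ∃ ζ : K, ζ ^ d = 1 ∧ ζ ≠ 1 ∧ q.1 = ζ * q.2 ^ n := by
  obtain ⟨u, v⟩ := q
  have hd : d ≠ 0 := ne_zero_of_dvd_ne_zero (by omega) hdn
  have pow_eq_one {ζ : K} (hζ : ζ ^ d = 1) : ζ ^ (n + 2) = 1 :=
    orderOf_dvd_iff_pow_eq_one.1 ((orderOf_dvd_of_pow_eq_one hζ).trans hdn)
  constructor
  · rintro ⟨⟨u', w⟩, hne, heq⟩
    obtain ⟨rfl, hmid, hpow⟩ : u = u' ∧ u * v + v ^ (n + 1) = u' * w + w ^ (n + 1) ∧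
        v ^ d = w ^ d := by
      simpa only [monomialUnfolding, Prod.mk.injEq] using heq
    have hwv : w ≠ v := fun h => hne (by rw [h])
    have hw : w ≠ 0 := by
      rintro rfl
      exact hwv (eq_zero_of_pow_eq_zero (hpow.trans (zero_pow hd))).symm
    have hv : v ≠ 0 := ne_zero_pow hd (hpow ▸ pow_ne_zero d hw)
    have hζ : (v / w) ^ d = 1 := by rw [div_pow, hpow, div_self (pow_ne_zero d hw)]
    have hζ1 : v / w ≠ 1 := fun h => hwv ((div_eq_one_iff_eq hw).1 h).symm
    have hw_eq : w = (v / w)⁻¹ * v := by rw [inv_div, div_mul_cancel₀ w hv]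
    exact ⟨hv, v / w, hζ, hζ1,
      (mul_add_pow_eq_inv_mul_iff (pow_eq_one hζ) hζ1 hv).1 (hw_eq ▸ hmid)⟩
  · rintro ⟨hv, ζ, hζ, hζ1, hu⟩
    refine ⟨(u, ζ⁻¹ * v), fun h => ?_, Prod.ext rfl (Prod.ext ?_ ?_)⟩
    · exact inv_ne_one.2 hζ1 ((mul_eq_right₀ hv).1 (congrArg Prod.snd h))
    · exact (mul_add_pow_eq_inv_mul_iff (pow_eq_one hζ) hζ1 hv).2 hu
    · simp only [monomialUnfolding, mul_pow, inv_pow, hζ, inv_one, one_mul]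

end Field

lemma prod_sub_pow_mul_eq_zero_iff {R : Type*} [CommRing R] [IsDomain R] {d : ℕ} [NeZero d]
    {ρ u w : R} (hρ : IsPrimitiveRoot ρ d) :
    ∏ i ∈ Finset.Ico 1 d, (u - ρ ^ i * w) = 0 ↔ ∃ ζ : R, ζ ^ d = 1 ∧ ζ ≠ 1 ∧ u = ζ * w := by
  simp only [Finset.prod_eq_zero_iff, Finset.mem_Ico, sub_eq_zero]
  constructor
  · rintro ⟨i, ⟨hi, hid⟩, hu⟩
    exact ⟨ρ ^ i, by rw [pow_right_comm, hρ.pow_eq_one, one_pow],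
      hρ.pow_ne_one_of_pos_of_lt (by omega) hid, hu⟩
  · rintro ⟨ζ, hζ, hζ1, hu⟩
    obtain ⟨i, hid, rfl⟩ := hρ.eq_pow_of_pow_eq_one hζ
    have hi : i ≠ 0 := by
      rintro rfl
      exact hζ1 (pow_zero ρ)
    exact ⟨i, ⟨Nat.one_le_iff_ne_zero.2 hi, hid⟩, hu⟩

lemma mem_closure_graph_of_dense {X Y : Type*} [TopologicalSpace X] [TopologicalSpace Y]
    {g : Y → X} (hg : Continuous g) {s : Set Y} (hs : Dense s) {q : X × Y} (hq : q.1 = g q.2) :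
    q ∈ closure {p : X × Y | p.2 ∈ s ∧ p.1 = g p.2} := by
  have hgraph : Continuous fun y => (g y, y) := by fun_prop
  have hmem : (g q.2, q.2) ∈ closure {p : X × Y | p.2 ∈ s ∧ p.1 = g p.2} :=
    map_mem_closure (f := fun y => (g y, y)) hgraph (hs q.2) fun _ hy => ⟨hy, rfl⟩
  rwa [← hq] at hmem

theorem stmt13_general {K : Type*} [Field K] [TopologicalSpace K] [IsTopologicalRing K]
    [T1Space K] [(𝓝[≠] (0 : K)).NeBot] {n d : ℕ} (hdn : d ∣ n + 2) {ρ : K}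
    (hρ : IsPrimitiveRoot ρ d) :
    closure (doublePoints (monomialUnfolding K n d)) =
      {q : K × K | ∏ i ∈ Finset.Ico 1 d, (q.1 - ρ ^ i * q.2 ^ n) = 0} := by
  have : NeZero d := ⟨ne_zero_of_dvd_ne_zero (by omega) hdn⟩
  apply Set.Subset.antisymm
  · refine closure_minimal (fun q hq => ?_) (isClosed_singleton.preimage (by fun_prop))
    exact (prod_sub_pow_mul_eq_zero_iff hρ).2 ((mem_doublePoints_monomialUnfolding_iff hdn).1 hq).2
  · intro q hq
    obtain ⟨ζ, hζ, hζ1, hu⟩ := (prod_sub_pow_mul_eq_zero_iff hρ).1 hq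
    have hcurve : Continuous fun v : K => ζ * v ^ n := by fun_prop
    refine closure_mono (fun p hp => ?_)
      (mem_closure_graph_of_dense hcurve (dense_compl_singleton 0) hu)
    exact (mem_doublePoints_monomialUnfolding_iff hdn).2 ⟨hp.1, ζ, hζ, hζ1, hp.2⟩

theorem stmt13 (k : ℕ) (hk : 2 ≤ k) :
    closure {q : ℂ × ℂ | ∃ q' : ℂ × ℂ, q' ≠ q ∧ Hk k q = Hk k q'} =
      {q : ℂ × ℂ |
        (q.1 - Complex.exp (2 * Real.pi * Complex.I / 3) * q.2 ^ (3 * k - 2)) *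
          (q.1 - Complex.exp (2 * Real.pi * Complex.I / 3) ^ 2 * q.2 ^ (3 * k - 2)) = 0} := by
  obtain ⟨n, hn⟩ : ∃ n, 3 * k = n + 2 := ⟨3 * k - 2, by omega⟩
  simpa [Hk, hn, monomialUnfolding, doublePoints, Finset.prod_Ico_succ_top] using
    stmt13_general (Dvd.intro k hn) (Complex.isPrimitiveRoot_exp 3 three_ne_zero)
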